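/- Let n ≥ 3 be an odd integer and k a PAC field of any characteristic. Then every separable field extension E/k of degree n can be realized by a trinomial: there exist an integer m with 1 ≤ m < n and elements a, b ∈ k such that Y^n + aY^m + b is irreducible in k[Y] and E is generated over k by one of its roots. -/

import Mathlib

/-!
The trinomial is found inside the one-parameter family `Y ^ n + Y ^ m - t`, where `m = 2` if
`n - 2` is nonzero in `k` and `m = n - 1` otherwise.

Let `K` be the algebraic closure of `k` and `f = Y ^ n + Y ^ m`. The Galois group of `f - t` over
`K(t)` is the full symmetric group (`realizedPerms_eq_top`):
* it is doubly transitive, because `f - t` is irreducible over `K(t)` and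
  `(f(Z) - f(S)) / (Z - S)` is irreducible over `K(S)`. After the substitution `Z = s S` the latter
  becomes `S ^ (n - m) A(s) + B(s)` with `A = 1 + s + ... + s ^ (n - 1)` and
  `B = 1 + s + ... + s ^ (m - 1)`, which is an Eisenstein polynomial in `S` at `s + 1` for `m = 2`
  (here `n` odd is used), and linear in `S` with coprime coefficients for `m = n - 1`;
* it contains a transposition, because for some `c` the polynomial `f - c` has exactly one multiple
  root, of multiplicity two. By Hensel's lemma all but two of the roots of `f - t` lie in
  `K((t - c))`, and at least one root does not, so some automorphism over `K((t - c))` swaps the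
  two remaining roots.

A doubly transitive, hence primitive, permutation group with a transposition is symmetric.

Now index the roots `y_σ` of `f - t` by the `k`-embeddings `σ : E → K`, choose `α` generic in `E`,
and consider the resolvent `P(t, x) = ∏_π (x - ∑_σ σ(α) y_{π σ})`, where `π` runs over the
permutations of the embeddings. Its coefficients are symmetric both in the `σ(α)` and in the `y_σ`,
so it lies in `k[t, x]` (`exists_resolventOf`). It is separable over `K(t)`, and the symmetric
Galois group permutes its roots transitively, so it is irreducible over `K`. As `k` is PAC, `P` has
infinitely many zeros `(t₀, x₀)` over `k`, and at one of them `x₀` is a simple root of `P(t₀, ·)`.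
After reordering, `x₀ = ∑_σ σ(α) y_σ` for the roots `y_σ` of `f - t₀`, and no other permutation of
the `y_σ` gives the same sum. Every automorphism `τ` of `K` over `k` fixes `x₀`, which forces
`τ(y_σ) = y_{τ σ}`: the action on the roots is the action on the embeddings. Hence
`y_σ = σ(x)` for some generator `x` of `E` (`generates_of_isolated`).
-/

open Polynomial

/-- A field `k` is PAC (pseudo algebraically closed): every polynomial in two
variables over `k` that remains irreducible over an algebraic closure of `k`
has infinitely many zeros in `k × k`. -/
def IsPAC (k : Type*) [Field k] : Prop :=
  ∀ f : MvPolynomial (Fin 2) k,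
    Irreducible (MvPolynomial.map (algebraMap k (AlgebraicClosure k)) f) →
    {x : k × k | MvPolynomial.eval ![x.1, x.2] f = 0}.Infinite

/-! ### The resolvent attached to two tuples -/

section Resolvent

variable {ι : Type*} [Fintype ι]

/-- The value at `a` of the resolvent of two tuples `u` and `v`, that is, the product over all
permutations `π` of `a - ∑ i, u i * v (π i)`. -/
noncomputable def permProd [DecidableEq ι] {R : Type*} [CommRing R] (a : R) (u v : ι → R) : R :=
  ∏ π : Equiv.Perm ι, (a - ∑ i, u i * v (π i))

lemma map_permProd [DecidableEq ι] {R S F : Type*} [CommRing R] [CommRing S] [FunLike F R S]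
    [RingHomClass F R S] (φ : F) (a : R) (u v : ι → R) :
    φ (permProd a u v) = permProd (φ a) (fun i => φ (u i)) (fun i => φ (v i)) := by
  simp [permProd, map_prod]

lemma permProd_perm_left [DecidableEq ι] {R : Type*} [CommRing R] (a : R) (u v : ι → R)
    (e : Equiv.Perm ι) : permProd a (fun i => u (e i)) v = permProd a u v := by
  refine Fintype.prod_equiv (Equiv.mulRight e⁻¹) _ _ fun π => ?_
  congr 1
  exact Fintype.sum_equiv e _ _ fun i => by simp

lemma permProd_perm_right [DecidableEq ι] {R : Type*} [CommRing R] (a : R) (u v : ι → R)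
    (e : Equiv.Perm ι) : permProd a u (fun i => v (e i)) = permProd a u v :=
  Fintype.prod_equiv (Equiv.mulLeft e) _ _ fun π => by simp

lemma esymm_eq_coeff {B : Type*} [CommRing B] (y : ι → B) (i : ℕ)
    (hi : i + 1 ≤ Fintype.card ι) :
    (Finset.univ.val.map y).esymm (i + 1)
      = (-1) ^ (i + 1) * (∏ j, (X - C (y j))).coeff (Fintype.card ι - (i + 1)) := by
  have h := Multiset.prod_X_sub_C_coeff (Finset.univ.val.map y)
    (k := Fintype.card ι - (i + 1)) (by simp)
  have hc : Multiset.card (Finset.univ.val.map y) = Fintype.card ι := by simp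
  rw [hc, Nat.sub_sub_self hi, Multiset.map_map] at h
  have : (Multiset.map ((fun t => X - C t) ∘ y) Finset.univ.val).prod = ∏ j, (X - C (y j)) := rfl
  rw [this] at h
  rw [h, ← mul_assoc, ← mul_pow]
  simp

/-- The fundamental theorem of symmetric polynomials: the value of a symmetric polynomial at `y` is
a fixed polynomial in the coefficients of `∏ j, (X - y j)`, uniformly in the ring containing `y`. -/
lemma exists_eval₂_esymm {A : Type*} [CommRing A] (q : MvPolynomial ι A) (hq : q.IsSymmetric) :
    ∃ Ψ : MvPolynomial (Fin (Fintype.card ι)) A, ∀ {B : Type*} [CommRing B] (φ : A →+* B)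
      (y : ι → B), q.eval₂ φ y = Ψ.eval₂ φ (fun i : Fin (Fintype.card ι) =>
        (-1) ^ (i.1 + 1) * (∏ j, (X - C (y j))).coeff (Fintype.card ι - (i.1 + 1))) := by
  obtain ⟨Ψ, hΨ⟩ := MvPolynomial.esymmAlgHom_surjective (σ := ι) A le_rfl ⟨q, hq⟩
  refine ⟨Ψ, fun {B} _ φ y => ?_⟩
  have h1 : q = MvPolynomial.aeval
      (fun i : Fin (Fintype.card ι) => MvPolynomial.esymm ι A (i + 1)) Ψ := by
    rw [← MvPolynomial.esymmAlgHom_apply, hΨ]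
  let := φ.toAlgebra
  have h2 : ∀ p : MvPolynomial ι A, p.eval₂ φ y = MvPolynomial.aeval y p := fun p => rfl
  rw [h2, h1, ← AlgHom.comp_apply, MvPolynomial.comp_aeval, MvPolynomial.aeval_def]
  congr 1
  funext i
  rw [MvPolynomial.aeval_esymm_eq_multiset_esymm, esymm_eq_coeff y i.1 i.2]

variable {k : Type*} [Field k]

/-- The polynomial over `A` obtained by substituting into `Φ` the signed coefficients of `h`, that
is, the elementary symmetric functions of the roots of `h` when `h` is monic of degree `n`. The
map `j` carries the coefficients of `Φ`, which lie in `k[X]`, to `A[X]`. -/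
noncomputable def resolventOf {n : ℕ} {A : Type*} [CommRing A] (Φ : MvPolynomial (Fin n) k[X])
    (j : k →+* A) (h : A[X]) : A[X] :=
  Φ.eval₂ (mapRingHom j) (fun i => C ((-1) ^ (i.1 + 1) * h.coeff (n - (i.1 + 1))))

lemma resolventOf_map {n : ℕ} {A B : Type*} [CommRing A] [CommRing B]
    (Φ : MvPolynomial (Fin n) k[X]) (j : k →+* A) (h : A[X]) (φ : A →+* B) :
    (resolventOf Φ j h).map φ = resolventOf Φ (φ.comp j) (h.map φ) := by
  unfold resolventOf
  rw [← coe_mapRingHom, MvPolynomial.eval₂_comp_left]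
  congr 1
  · ext <;> simp
  · funext i
    simp

/-- The resolvent of `z` and a tuple of indeterminates has coefficients in `k` whenever `z` is the
tuple of all roots of a polynomial over `k`: it is symmetric in the entries of `z`. -/
theorem exists_map_eq_permProd [DecidableEq ι] {K : Type*} [Field K] [Algebra k K] (z : ι → K)
    (g : k[X]) (hg : g.map (algebraMap k K) = ∏ i, (X - C (z i))) :
    ∃ q : MvPolynomial ι k[X], q.map (mapRingHom (algebraMap k K)) =
      permProd (MvPolynomial.C X) (fun i => MvPolynomial.C (C (z i))) MvPolynomial.X := by
  set μ : k[X] →+* K[X] := mapRingHom (algebraMap k K) with hμ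
  let T : MvPolynomial ι (MvPolynomial ι k[X]) :=
    permProd (MvPolynomial.C (MvPolynomial.C X)) MvPolynomial.X
      (fun i => MvPolynomial.C (MvPolynomial.X i))
  have hT : T.IsSymmetric := by
    intro e
    simp only [T, map_permProd, MvPolynomial.rename_X, MvPolynomial.rename_C]
    exact permProd_perm_left _ _ _ e
  obtain ⟨Ψ, hΨ⟩ := exists_eval₂_esymm T hT
  have key := hΨ (MvPolynomial.map μ) (fun i => MvPolynomial.C (C (z i)))
  have hprod : ∏ j, (X - C (MvPolynomial.C (C (z j)) : MvPolynomial ι K[X]))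
      = (g.map ((MvPolynomial.C : k[X] →+* MvPolynomial ι k[X]).comp C)).map
        (MvPolynomial.map μ) := by
    have : (MvPolynomial.map μ).comp ((MvPolynomial.C : k[X] →+* MvPolynomial ι k[X]).comp C)
        = ((MvPolynomial.C : K[X] →+* MvPolynomial ι K[X]).comp C).comp (algebraMap k K) := by
      ext a : 1
      simp [μ]
    rw [Polynomial.map_map, this, ← Polynomial.map_map, hg, Polynomial.map_prod]
    simp
  refine ⟨Ψ.eval₂ (RingHom.id _) (fun i : Fin (Fintype.card ι) => (-1) ^ (i.1 + 1) *
    (g.map ((MvPolynomial.C : k[X] →+* MvPolynomial ι k[X]).comp C)).coeff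
      (Fintype.card ι - (i.1 + 1))), ?_⟩
  rw [MvPolynomial.eval₂_comp_left, RingHom.comp_id]
  have hQ : permProd (MvPolynomial.C X) (fun i => MvPolynomial.C (C (z i))) MvPolynomial.X
      = T.eval₂ (MvPolynomial.map μ) (fun i => MvPolynomial.C (C (z i))) := by
    simp only [T, ← MvPolynomial.coe_eval₂Hom, map_permProd]
    simp [μ]
  rw [hQ, key, hprod]
  congr 1
  funext i
  simp only [Function.comp_apply, map_mul, map_pow, map_neg, map_one, Polynomial.coeff_map]

/-- If `z` is the tuple of all roots of a polynomial over `k`, then the resolvent of `z` and `y`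
is a universal expression over `k` in the coefficients of `∏ i, (X - y i)`. The same `Φ` serves for
all rings `B`, so that it computes both the generic resolvent and its specializations. -/
theorem exists_resolventOf [DecidableEq ι] {K : Type*} [Field K] [Algebra k K] (z : ι → K)
    (g : k[X]) (hg : g.map (algebraMap k K) = ∏ i, (X - C (z i))) :
    ∃ Φ : MvPolynomial (Fin (Fintype.card ι)) k[X],
      ∀ {B : Type*} [CommRing B] (φ : K →+* B) (y : ι → B),
        resolventOf Φ (φ.comp (algebraMap k K)) (∏ i, (X - C (y i)))
          = permProd X (fun i => C (φ (z i))) (fun i => C (y i)) := by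
  obtain ⟨q, hq⟩ := exists_map_eq_permProd z g hg
  have hsym : q.IsSymmetric := by
    intro e
    apply MvPolynomial.map_injective (mapRingHom (algebraMap k K))
      (Polynomial.map_injective _ (algebraMap k K).injective)
    rw [MvPolynomial.map_rename, hq]
    simp only [map_permProd, MvPolynomial.rename_X, MvPolynomial.rename_C]
    exact permProd_perm_right _ _ _ e
  obtain ⟨Φ, hΦ⟩ := exists_eval₂_esymm q hsym
  refine ⟨Φ, fun {B} _ φ y => ?_⟩
  have h1 := hΦ (mapRingHom (φ.comp (algebraMap k K))) (fun i => C (y i))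
  have h2 : q.eval₂ (mapRingHom (φ.comp (algebraMap k K))) (fun i => C (y i))
      = permProd X (fun i => C (φ (z i))) (fun i => C (y i)) := by
    have : mapRingHom (φ.comp (algebraMap k K))
        = (mapRingHom φ).comp (mapRingHom (algebraMap k K)) := by
      ext <;> simp
    rw [this, ← MvPolynomial.eval₂_map, hq, ← MvPolynomial.coe_eval₂Hom, map_permProd]
    simp
  rw [← h2, h1, resolventOf]
  congr 1
  funext i
  have h3 : (∏ j, (X - C (C (y j))) : B[X][X]) = (∏ j, (X - C (y j))).map C := by
    simp [Polynomial.map_prod]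
  rw [h3, coeff_map]
  simp

end Resolvent

/-! ### The Galois group of `f - t` over `K(t)` -/

section Galois

variable {K : Type*} [Field K]

/-- The polynomial `f - t` in `K[t][Y]` is irreducible, being linear in `t`. -/
lemma irreducible_family (f : K[X]) : Irreducible (f.map C - C X : K[X][X]) := by
  have h : Irreducible (Bivariate.swap (f.map C - C X : K[X][X])) := by
    rw [map_sub, Bivariate.swap_map_C, Bivariate.swap_C, Polynomial.map_X,
      ← neg_sub]
    exact (Associated.neg_left (Associated.refl _)).symm.irreducible (irreducible_X_sub_C f)
  exact (MulEquiv.irreducible_iff (Bivariate.swap (R := K))).mp h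

lemma monic_family {f : K[X]} (hf : f.Monic) (hn : f.natDegree ≠ 0) :
    (f.map C - C X : K[X][X]).Monic := by
  apply (hf.map C).sub_of_left
  rw [hf.degree_map]
  exact degree_C_le.trans_lt (natDegree_pos_iff_degree_pos.mp (Nat.pos_of_ne_zero hn))

variable {F : Type*} [Field F] [Algebra K[X] F] [IsFractionRing K[X] F]

lemma separable_family {f : K[X]} (hf : f.Monic) (hn : f.natDegree ≠ 0)
    (hd : derivative f ≠ 0) :
    ((f.map C - C X : K[X][X]).map (algebraMap K[X] F)).Separable := by
  rw [separable_iff_derivative_ne_zero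
    ((monic_family hf hn).irreducible_iff_irreducible_map_fraction_map.mp (irreducible_family f))]
  rw [derivative_map, derivative_sub, derivative_C, sub_zero, derivative_map, Polynomial.map_map]
  intro h
  refine hd ((Polynomial.map_eq_zero_iff ?_).mp h)
  exact (IsFractionRing.injective K[X] F).comp C_injective

variable {N : Type*} [Field N] [Algebra F N]
variable {ι : Type*} [Fintype ι]

lemma exists_perm_of_algEquiv {h : F[X]} {y : ι → N} (hy : Function.Injective y)
    (hh : h.map (algebraMap F N) = ∏ i, (X - C (y i))) (σ : N ≃ₐ[F] N) :
    ∃ ρ : Equiv.Perm ι, ∀ i, σ (y i) = y (ρ i) := by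
  have hroot : ∀ x, aeval x h = 0 ↔ ∃ i, x = y i := by
    intro x
    rw [← eval_map_algebraMap, hh, eval_prod, Finset.prod_eq_zero_iff]
    simp [sub_eq_zero]
  have h1 : ∀ i, ∃ j, σ (y i) = y j := fun i => by
    rw [← hroot]
    change aeval (σ.toAlgHom (y i)) h = 0
    rw [aeval_algHom_apply, (hroot _).mpr ⟨i, rfl⟩, map_zero]
  choose ρ hρ using h1
  have hinj : Function.Injective ρ := fun a b hab =>
    hy (σ.injective (by rw [hρ, hρ, hab]))
  exact ⟨Equiv.ofBijective ρ (Finite.injective_iff_bijective.mp hinj), hρ⟩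

/-- The group of those permutations of the indices of `y` that are induced by some automorphism of
`N` over `F`. When `y` lists the distinct roots of a polynomial over `F` and `N` is normal over `F`,
this is the Galois group of the polynomial, as a permutation group. -/
def realizedPerms (F : Type*) {N : Type*} [Field F] [Field N] [Algebra F N] {ι : Type*}
    (y : ι → N) : Subgroup (Equiv.Perm ι) where
  carrier := {ρ | ∃ σ : N ≃ₐ[F] N, ∀ i, σ (y i) = y (ρ i)}
  one_mem' := ⟨1, fun _ => rfl⟩
  mul_mem' := by
    rintro a b ⟨σ, hσ⟩ ⟨τ, hτ⟩
    exact ⟨σ * τ, fun i => by rw [AlgEquiv.mul_apply, hτ, hσ, Equiv.Perm.mul_apply]⟩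
  inv_mem' := by
    rintro a ⟨σ, hσ⟩
    refine ⟨σ⁻¹, fun i => σ.injective ?_⟩
    rw [← AlgEquiv.mul_apply, mul_inv_cancel, AlgEquiv.one_apply, hσ]
    simp

lemma exists_algEquiv_of_irreducible {F N : Type*} [Field F] [Field N] [Algebra F N] [Normal F N]
    {w : F[X]} (hw : Irreducible w)
    {a b : N} (ha : aeval a w = 0) (hb : aeval b w = 0) : ∃ σ : N ≃ₐ[F] N, σ a = b := by
  have hai : IsAlgebraic F a := ⟨w, hw.ne_zero, ha⟩
  refine minpoly.exists_algEquiv_of_root' hai ?_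
  have h1 := minpoly.dvd F a ha
  obtain ⟨c, hc⟩ := (minpoly.irreducible hai.isIntegral).dvd_symm hw h1
  rw [hc, map_mul, hb, zero_mul]

/-- If `w = (f(Z) - f(S)) / (Z - S)` is irreducible over `K(S)`, the stabilizer of one root of
`f - t` acts transitively on the others: `K(S)` is identified with the field generated over `K` by
that root. -/
lemma exists_perm_fixing_of_irreducible [IsAlgClosure F N] {f : K[X]} (hn : f.natDegree ≠ 0)
    {y : ι → N}
    (hy : Function.Injective y)
    (hh : ((f.map C - C X : K[X][X]).map (algebraMap K[X] F)).map (algebraMap F N)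
      = ∏ i, (X - C (y i)))
    {w : (FractionRing K[X])[X]} (hw : Irreducible w)
    (hfw : f.map ((algebraMap K[X] (FractionRing K[X])).comp C)
      - C (algebraMap K[X] (FractionRing K[X]) f)
        = (X - C (algebraMap K[X] (FractionRing K[X]) X)) * w)
    {i j l : ι} (hj : j ≠ i) (hl : l ≠ i) :
    ∃ ρ ∈ realizedPerms F y, ρ i = i ∧ ρ j = l := by
  have : IsAlgClosed N := IsAlgClosure.isAlgClosed F
  have : Algebra.IsAlgebraic F N := IsAlgClosure.isAlgebraic
  set κ : K →+* N := (algebraMap F N).comp ((algebraMap K[X] F).comp C) with hκ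
  set t : N := algebraMap F N (algebraMap K[X] F X) with ht
  let := κ.toAlgebra
  have hκ' : algebraMap K N = κ := rfl
  have hfam : ∀ x, f.eval₂ κ x - t = ∏ i, (x - y i) := by
    intro x
    have := congrArg (eval x) hh
    rw [eval_prod, eval_map, eval₂_map] at this
    simpa [eval₂_map, hκ, ht, RingHom.comp_assoc] using this
  have hfy : ∀ i, f.eval₂ κ (y i) = t := fun i =>
    sub_eq_zero.mp ((hfam (y i)).trans (Finset.prod_eq_zero (Finset.mem_univ i) (sub_self _)))
  have hev : ∀ p : K[X], aeval t p = algebraMap F N (algebraMap K[X] F p) := by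
    intro p
    have : (aeval t : K[X] →ₐ[K] N).toRingHom = (algebraMap F N).comp (algebraMap K[X] F) := by
      ext a
      · simp [hκ', hκ]
      · simp [ht]
    exact congrArg (fun r => r p) this
  have httr : Transcendental K t := by
    rw [transcendental_iff_injective]
    intro p q hpq
    rw [hev, hev] at hpq
    exact IsFractionRing.injective K[X] F ((algebraMap F N).injective hpq)
  have hyt : Transcendental K (y i) := by
    have : Transcendental K (aeval (y i) f) := by
      rw [aeval_def, hκ', hfy]; exact httr
    exact (transcendental_aeval_iff.mp this).1
  have hinj : Function.Injective (aeval (y i) : K[X] →ₐ[K] N).toRingHom :=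
    transcendental_iff_injective.mp hyt
  let φ : FractionRing K[X] →+* N := IsFractionRing.lift hinj
  have hφ : ∀ p : K[X], φ (algebraMap K[X] _ p) = aeval (y i) p :=
    fun p => IsFractionRing.lift_algebraMap hinj p
  have hinj0 : Function.Injective
      ((algebraMap K[X] (FractionRing K[X])).comp (compRingHom f)) := by
    rw [RingHom.coe_comp]
    refine (IsFractionRing.injective K[X] (FractionRing K[X])).comp ?_
    rw [injective_iff_map_eq_zero]
    intro p hp
    have hp' : p.comp f = 0 := hp
    rcases comp_eq_zero_iff.mp hp' with h | ⟨_, h⟩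
    · exact h
    · rw [h, natDegree_C] at hn; exact absurd rfl hn
  let θ : F →+* FractionRing K[X] := IsFractionRing.lift hinj0
  have hθ : φ.comp θ = algebraMap F N := by
    refine IsLocalization.ringHom_ext (nonZeroDivisors K[X]) ?_
    ext p
    · simp only [RingHom.comp_apply, θ, IsFractionRing.lift_algebraMap]
      rw [hφ]
      simp [hκ', hκ]
    · simp only [RingHom.comp_apply, θ, IsFractionRing.lift_algebraMap]
      rw [hφ]
      simp [aeval_def, hκ', hfy, ht]
  let : Algebra F (FractionRing K[X]) := θ.toAlgebra
  let : Algebra (FractionRing K[X]) N := φ.toAlgebra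
  have : IsScalarTower F (FractionRing K[X]) N := IsScalarTower.of_algebraMap_eq' hθ.symm
  have : Algebra.IsAlgebraic (FractionRing K[X]) N :=
    Algebra.IsAlgebraic.tower_top (K := F) (FractionRing K[X])
  have : IsAlgClosure (FractionRing K[X]) N := ⟨inferInstance, inferInstance⟩
  have : Normal (FractionRing K[X]) N := IsAlgClosure.normal _ _
  have hwy : ∀ j, j ≠ i → aeval (y j) w = 0 := by
    intro j hj
    have h1 := congrArg (eval₂ φ (y j)) hfw
    rw [eval₂_mul, eval₂_sub, eval₂_sub, eval₂_map, eval₂_C, eval₂_X, eval₂_C, hφ, hφ, aeval_X,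
      aeval_def, hκ', hfy] at h1
    have h2 : φ.comp ((algebraMap K[X] (FractionRing K[X])).comp C) = κ := by
      ext a
      simp [hφ, hκ']
    rw [h2, hfy, sub_self] at h1
    exact (mul_eq_zero.mp h1.symm).resolve_left (sub_ne_zero.mpr (hy.ne hj))
  obtain ⟨σ, hσ⟩ := exists_algEquiv_of_irreducible hw (hwy j hj) (hwy l hl)
  obtain ⟨ρ, hρ⟩ := exists_perm_of_algEquiv hy hh (σ.restrictScalars F)
  refine ⟨ρ, ⟨_, hρ⟩, hy ?_, hy ?_⟩
  · rw [← hρ]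
    have : y i = algebraMap (FractionRing K[X]) N (algebraMap K[X] _ X) := by
      change _ = φ _
      rw [hφ, aeval_X]
    rw [this]
    exact σ.commutes _
  · rw [← hρ]
    exact hσ

lemma exists_algEquiv_apply_ne {L Ω : Type*} [Field L] [Field Ω] [Algebra L Ω] [Normal L Ω]
    {x : Ω} (hsep : IsSeparable L x) (hx : x ∉ (algebraMap L Ω).range) :
    ∃ σ : Ω ≃ₐ[L] Ω, σ x ≠ x := by
  obtain ⟨y, hy, hconj⟩ := (notMem_iff_exists_ne_and_isConjRoot hsep
    (Normal.splits inferInstance x)).mp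
      (fun h => hx (by obtain ⟨r, hr⟩ := Algebra.mem_bot.mp h; exact ⟨r, hr⟩))
  obtain ⟨σ, hσ⟩ := isConjRoot_iff_exists_algEquiv.mp hconj.symm
  exact ⟨σ, by rw [hσ]; exact hy.symm⟩

/-- Hensel lifting: a simple root `r` of `f - c` lifts to a root of `f - (c + T)` in `K[[T]]`. -/
lemma exists_powerSeries_root {f g : K[X]} (hf : f.Monic) (hn : f.natDegree ≠ 0) {c y₀ r : K}
    (hfg : f - C c = (X - C y₀) ^ 2 * g) (hg : g.Separable) (hy₀ : g.eval y₀ ≠ 0)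
    (hr : g.eval r = 0) :
    ∃ R : PowerSeries K, f.eval₂ PowerSeries.C R = PowerSeries.X + PowerSeries.C c ∧
      PowerSeries.constantCoeff R = r := by
  set p : (PowerSeries K)[X] := f.map PowerSeries.C - C (PowerSeries.X + PowerSeries.C c) with hp
  have hmonic : p.Monic := by
    apply (hf.map _).sub_of_left
    rw [hf.degree_map]
    exact degree_C_le.trans_lt (natDegree_pos_iff_degree_pos.mp (Nat.pos_of_ne_zero hn))
  have hfr : f.eval r = c := by
    have := congrArg (eval r) hfg
    simpa [hr, sub_eq_zero] using this
  have hne : r ≠ y₀ := fun h => hy₀ (h ▸ hr)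
  have hdr : (derivative f).eval r ≠ 0 := by
    have h1 : derivative f = derivative ((X - C y₀) ^ 2 * g) := by rw [← hfg]; simp
    have h2 : (derivative g).eval r ≠ 0 := hg.eval₂_derivative_ne_zero (RingHom.id K) (by simpa)
    rw [h1, derivative_mul]
    simp [hr, h2, sub_ne_zero.mpr hne]
  obtain ⟨R, hR, hRr⟩ := HenselianRing.is_henselian (I := Ideal.span {PowerSeries.X}) p hmonic
    (PowerSeries.C r) (by
      rw [Ideal.mem_span_singleton, PowerSeries.X_dvd_iff, hp]
      simp [eval_map, ← hfr]) (by
      apply RingHom.isUnit_map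
      rw [PowerSeries.isUnit_iff_constantCoeff, hp, derivative_sub, derivative_map, derivative_C,
        sub_zero, eval_map, eval₂_hom]
      simpa using hdr)
  refine ⟨R, ?_, ?_⟩
  · have := hR.eq_zero
    rw [hp, eval_sub, eval_map, eval_C, sub_eq_zero] at this
    exact this
  · rw [Ideal.mem_span_singleton, PowerSeries.X_dvd_iff] at hRr
    simpa [sub_eq_zero] using hRr

/-- The double root `y₀` of `f - c` does not lift to a root of `f - (c + T)` in `K[[T]]`:
otherwise `T ^ 2` would divide `T`. -/
lemma powerSeries_root_constantCoeff_ne {f g : K[X]} {c y₀ : K}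
    (hfg : f - C c = (X - C y₀) ^ 2 * g) {R : PowerSeries K}
    (hR : f.eval₂ PowerSeries.C R = PowerSeries.X + PowerSeries.C c) :
    PowerSeries.constantCoeff R ≠ y₀ := by
  intro h
  have h1 : PowerSeries.X ∣ R - PowerSeries.C y₀ := by
    rw [PowerSeries.X_dvd_iff]; simp [h]
  have h2 : (R - PowerSeries.C y₀) ^ 2 * g.eval₂ PowerSeries.C R = PowerSeries.X := by
    have := congrArg (eval₂ PowerSeries.C R) hfg
    rw [eval₂_sub, eval₂_mul, eval₂_pow, eval₂_sub, eval₂_X, eval₂_C, eval₂_C, hR] at this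
    rw [← this]; ring
  have h3 : (PowerSeries.X : PowerSeries K) ^ 2 ∣ PowerSeries.X := by
    conv_rhs => rw [← h2]
    exact (pow_dvd_pow_of_dvd h1 2).mul_right _
  have := PowerSeries.X_pow_dvd_iff.mp h3 1 (by norm_num)
  simp at this

/-- If `f - c` has a single double root and otherwise simple roots, the Galois group of `f - t`
over `K(t)` contains a transposition, coming from an automorphism over the Laurent series field in
`T = t - c`. -/
lemma exists_isSwap_mem [IsAlgClosed K] [IsAlgClosure F N] [DecidableEq ι] {f g : K[X]}
    (hf : f.Monic) (hn : f.natDegree ≠ 0)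
    {c y₀ : K} (hfg : f - C c = (X - C y₀) ^ 2 * g) (hg : g.Separable) (hy₀ : g.eval y₀ ≠ 0)
    {y : ι → N} (hy : Function.Injective y)
    (hh : ((f.map C - C X : K[X][X]).map (algebraMap K[X] F)).map (algebraMap F N)
      = ∏ i, (X - C (y i))) :
    ∃ ρ ∈ realizedPerms F y, ρ.IsSwap := by
  classical
  have : Algebra.IsAlgebraic F N := IsAlgClosure.isAlgebraic
  have : Normal F N := IsAlgClosure.normal _ _
  let Ω := AlgebraicClosure (LaurentSeries K)
  let ψ₀ : K[X] →+* PowerSeries K :=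
    coeToPowerSeries.ringHom.comp (compRingHom (X + C c))
  have hψ₀C : ∀ a, ψ₀ (C a) = PowerSeries.C a := fun a => by simp [ψ₀]
  have hψ₀X : ψ₀ X = PowerSeries.X + PowerSeries.C c := by simp [ψ₀]
  have hinj : Function.Injective
      ((algebraMap (PowerSeries K) (LaurentSeries K)).comp ψ₀) := by
    rw [RingHom.coe_comp, RingHom.coe_comp]
    refine (IsFractionRing.injective (PowerSeries K) (LaurentSeries K)).comp
      ((Polynomial.coe_injective K).comp ?_)
    intro p q hpq
    exact taylor_injective c hpq
  let ψ : F →+* LaurentSeries K := IsFractionRing.lift hinj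
  have hψ : ∀ p, ψ (algebraMap K[X] F p) = algebraMap (PowerSeries K) (LaurentSeries K) (ψ₀ p) :=
    fun p => IsFractionRing.lift_algebraMap hinj p
  let : Algebra F (LaurentSeries K) := ψ.toAlgebra
  have : IsScalarTower F (LaurentSeries K) Ω := inferInstance
  have hFΩ : algebraMap F Ω = (algebraMap (LaurentSeries K) Ω).comp ψ :=
    IsScalarTower.algebraMap_eq F (LaurentSeries K) Ω
  let ν : N →ₐ[F] Ω := IsAlgClosed.lift
  let : Algebra N Ω := ν.toRingHom.toAlgebra
  have : IsScalarTower F N Ω := IsScalarTower.of_algebraMap_eq' ν.comp_algebraMap.symm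
  let χ : PowerSeries K →+* Ω :=
    (algebraMap (LaurentSeries K) Ω).comp (algebraMap (PowerSeries K) (LaurentSeries K))
  have hχ : Function.Injective χ := by
    rw [RingHom.coe_comp]
    exact (algebraMap (LaurentSeries K) Ω).injective.comp
      (IsFractionRing.injective (PowerSeries K) (LaurentSeries K))
  set p : (PowerSeries K)[X] := f.map PowerSeries.C - C (PowerSeries.X + PowerSeries.C c) with hp
  have hpm : p.Monic := by
    apply (hf.map _).sub_of_left
    rw [hf.degree_map]
    exact degree_C_le.trans_lt (natDegree_pos_iff_degree_pos.mp (Nat.pos_of_ne_zero hn))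
  have hpχ : p.map χ = ∏ i, (X - C (ν (y i))) := by
    have h1 := congrArg (Polynomial.map ν.toRingHom) hh
    have h2 : ((ν.toRingHom).comp (algebraMap F N)).comp (algebraMap K[X] F) = χ.comp ψ₀ := by
      have : ν.toRingHom.comp (algebraMap F N) = algebraMap F Ω := ν.comp_algebraMap
      rw [this, hFΩ]
      refine RingHom.ext fun q => ?_
      simp [χ, hψ]
    rw [Polynomial.map_map, Polynomial.map_map, h2, Polynomial.map_prod] at h1
    have h3 : p = (f.map C - C X : K[X][X]).map ψ₀ := by
      rw [hp, Polynomial.map_sub, Polynomial.map_map, Polynomial.map_C, hψ₀X]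
      congr 2
      ext1 a
      exact (hψ₀C a).symm
    rw [h3, Polynomial.map_map, h1]
    simp
  have hYinj : Function.Injective (fun i => ν (y i)) := ν.injective.comp hy
  have hroot : ∀ R, f.eval₂ PowerSeries.C R = PowerSeries.X + PowerSeries.C c ↔
      ∃ i, ν (y i) = χ R := by
    intro R
    have h1 : χ (p.eval R) = ∏ i, (χ R - ν (y i)) := by
      rw [← eval₂_hom, ← eval_map, hpχ, eval_prod]; simp
    have h2 : p.eval R = f.eval₂ PowerSeries.C R - (PowerSeries.X + PowerSeries.C c) := by
      rw [hp, eval_sub, eval_map, eval_C]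
    rw [← sub_eq_zero, ← h2, ← map_eq_zero_iff χ hχ, h1, Finset.prod_eq_zero_iff]
    simp only [Finset.mem_univ, true_and, sub_eq_zero]
    exact exists_congr fun i => eq_comm
  -- each root of `g` is the constant coefficient of a root in `K[[T]]`
  have hA : ∀ r : g.roots.toFinset, ∃ i R, ν (y i) = χ R ∧ PowerSeries.constantCoeff R = r.1 := by
    intro r
    have hr : g.eval r.1 = 0 := by
      have := r.2
      rw [Multiset.mem_toFinset] at this
      exact isRoot_of_mem_roots this
    obtain ⟨R, hR, hRr⟩ := exists_powerSeries_root hf hn hfg hg hy₀ hr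
    obtain ⟨i, hi⟩ := (hroot R).mp hR
    exact ⟨i, R, hi, hRr⟩
  choose idx Rs hidx hRs using hA
  have hidxinj : Function.Injective idx := by
    intro a b hab
    have : Rs a = Rs b := hχ (by rw [← hidx, ← hidx, hab])
    exact Subtype.ext (by rw [← hRs, ← hRs, this])
  have hcard : Fintype.card ι = g.roots.toFinset.card + 2 := by
    have h1 : f.natDegree = Fintype.card ι := by
      have h := congrArg natDegree hpχ
      rw [hpm.natDegree_map, natDegree_prod_of_monic _ _ (fun i _ => monic_X_sub_C _)] at h
      simp only [natDegree_X_sub_C, Finset.sum_const, Finset.card_univ, smul_eq_mul, mul_one] at h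
      rw [← h, hp, natDegree_sub_C, hf.natDegree_map]
    have hg0 : g ≠ 0 := hg.ne_zero
    have h2 : f.natDegree = 2 + g.natDegree := by
      rw [← natDegree_sub_C (a := c), hfg, natDegree_mul (pow_ne_zero _ (X_sub_C_ne_zero _)) hg0,
        natDegree_pow, natDegree_X_sub_C]
    have h3 : g.natDegree = g.roots.toFinset.card := by
      rw [(IsAlgClosed.splits g).natDegree_eq_card_roots,
        Multiset.toFinset_card_of_nodup (nodup_roots hg)]
    omega
  -- If all roots were power series, one of them would have constant coefficient `y₀`.
  have hB : ∃ i, ∀ R, ν (y i) ≠ χ R := by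
    by_contra! hall
    choose S hS using hall
    have h1 : p = ∏ i, (X - C (S i)) := by
      apply Polynomial.map_injective χ hχ
      rw [hpχ, Polynomial.map_prod]
      simp [hS]
    have h2 := congrArg (eval y₀ ∘ Polynomial.map (PowerSeries.constantCoeff (R := K))) h1
    have h3 : p.map (PowerSeries.constantCoeff (R := K)) = f - C c := by
      rw [hp, Polynomial.map_sub, Polynomial.map_map, Polynomial.map_C]
      have : (PowerSeries.constantCoeff (R := K)).comp PowerSeries.C = RingHom.id K := by
        ext a; simp
      rw [this, Polynomial.map_id]
      simp
    rw [Function.comp_apply, h3, hfg, Function.comp_apply, Polynomial.map_prod, eval_prod] at h2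
    simp only [eval_mul, eval_pow, eval_sub, eval_X, eval_C, sub_self, ne_eq, OfNat.ofNat_ne_zero,
      not_false_eq_true, zero_pow, zero_mul, Polynomial.map_sub, Polynomial.map_X,
      Polynomial.map_C] at h2
    obtain ⟨i, -, hi⟩ := Finset.prod_eq_zero_iff.mp h2.symm
    exact powerSeries_root_constantCoeff_ne hfg ((hroot (S i)).mpr ⟨i, hS i⟩)
      (sub_eq_zero.mp hi).symm
  obtain ⟨i₀, hi₀⟩ := hB
  set pL : (LaurentSeries K)[X] := p.map (algebraMap _ _) with hpL
  have hpLΩ : pL.map (algebraMap (LaurentSeries K) Ω) = ∏ i, (X - C (ν (y i))) := by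
    rw [hpL, Polynomial.map_map]; exact hpχ
  have hpLy : aeval (ν (y i₀)) pL = 0 := by
    rw [← eval_map_algebraMap, hpLΩ, eval_prod]
    exact Finset.prod_eq_zero (Finset.mem_univ i₀) (by simp)
  -- `K[[T]]` is integrally closed, so the root is not a Laurent series either.
  have hnot : ν (y i₀) ∉ (algebraMap (LaurentSeries K) Ω).range := by
    rintro ⟨x, hx⟩
    have : IsIntegral (PowerSeries K) x := by
      refine ⟨p, hpm, ?_⟩
      rw [← hx, aeval_algebraMap_apply, map_eq_zero, hpL, aeval_map_algebraMap] at hpLy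
      exact hpLy
    obtain ⟨R, hR⟩ := IsIntegrallyClosed.isIntegral_iff.mp this
    exact hi₀ R (by rw [← hx, ← hR]; rfl)
  have hsep : IsSeparable (LaurentSeries K) (ν (y i₀)) := by
    have h1 : pL.Separable := by
      rw [← separable_map (algebraMap (LaurentSeries K) Ω), hpLΩ]
      exact separable_prod_X_sub_C_iff.mpr hYinj
    exact h1.of_dvd (minpoly.dvd _ _ hpLy)
  obtain ⟨σ, hσ⟩ := exists_algEquiv_apply_ne hsep hnot
  let τ := (σ.restrictScalars F).restrictNormal N
  have hτ : ∀ x, ν (τ x) = σ (ν x) := fun x =>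
    AlgEquiv.restrictNormal_commutes (σ.restrictScalars F) N x
  obtain ⟨ρ, hρ⟩ := exists_perm_of_algEquiv hy hh τ
  refine ⟨ρ, ⟨τ, hρ⟩, ?_⟩
  have hfix : ∀ r, ρ (idx r) = idx r := by
    intro r
    apply hYinj
    change ν (y (ρ (idx r))) = ν (y (idx r))
    rw [← hρ, hτ, hidx]
    exact σ.commutes _
  have hmove : ρ i₀ ≠ i₀ := by
    intro h
    apply hσ
    rw [← hτ, hρ, h]
  rw [← Equiv.Perm.card_support_eq_two]
  have hle : ρ.support.card ≤ 2 := by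
    have hdisj : Disjoint ρ.support (Finset.univ.image idx) := by
      rw [Finset.disjoint_right]
      intro a ha
      obtain ⟨r, -, rfl⟩ := Finset.mem_image.mp ha
      rw [Equiv.Perm.notMem_support]
      exact hfix r
    have h1 := Finset.card_union_of_disjoint hdisj
    have h2 := Finset.card_le_univ (ρ.support ∪ Finset.univ.image idx)
    rw [h1, Finset.card_image_of_injective _ hidxinj, Finset.card_univ, Fintype.card_coe, hcard]
      at h2
    omega
  have h0 : ρ.support.card ≠ 0 := by
    rw [Finset.card_ne_zero]
    exact ⟨i₀, Equiv.Perm.mem_support.mpr hmove⟩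
  have h1 := Equiv.Perm.card_support_ne_one ρ
  omega

/-- The Galois group of `f - t` over `K(t)` is the full symmetric group: it is doubly transitive
and contains a transposition. -/
theorem realizedPerms_eq_top [IsAlgClosed K] [IsAlgClosure F N] {f g : K[X]}
    (hf : f.Monic) (hn : f.natDegree ≠ 0)
    {c y₀ : K} (hfg : f - C c = (X - C y₀) ^ 2 * g) (hg : g.Separable) (hy₀ : g.eval y₀ ≠ 0)
    {w : (FractionRing K[X])[X]} (hw : Irreducible w)
    (hfw : f.map ((algebraMap K[X] (FractionRing K[X])).comp C)
      - C (algebraMap K[X] (FractionRing K[X]) f)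
        = (X - C (algebraMap K[X] (FractionRing K[X]) X)) * w)
    {y : ι → N} (hy : Function.Injective y)
    (hh : ((f.map C - C X : K[X][X]).map (algebraMap K[X] F)).map (algebraMap F N)
      = ∏ i, (X - C (y i))) :
    realizedPerms F y = ⊤ := by
  classical
  have : Normal F N := IsAlgClosure.normal _ _
  obtain ⟨ρ, hρ, hswap⟩ := exists_isSwap_mem hf hn hfg hg hy₀ hy hh
  refine Equiv.Perm.subgroup_eq_top_of_isPreprimitive_of_isSwap_mem ?_ ρ hswap hρ
  apply MulAction.isPreprimitive_of_is_two_pretransitive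
  rw [MulAction.is_two_pretransitive_iff]
  intro a b c d hab hcd
  have hroot : ∀ i, aeval (y i) ((f.map C - C X : K[X][X]).map (algebraMap K[X] F)) = 0 := by
    intro i
    rw [← eval_map_algebraMap, hh, eval_prod]
    exact Finset.prod_eq_zero (Finset.mem_univ i) (by simp)
  obtain ⟨σ, hσ⟩ := exists_algEquiv_of_irreducible
    ((monic_family hf hn).irreducible_iff_irreducible_map_fraction_map.mp (irreducible_family f))
    (hroot a) (hroot c)
  obtain ⟨ρ₁, hρ₁⟩ := exists_perm_of_algEquiv hy hh σ
  have h1 : ρ₁ a = c := hy (by rw [← hρ₁, hσ])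
  obtain ⟨ρ₂, hρ₂, h2, h3⟩ := exists_perm_fixing_of_irreducible hn hy hh hw hfw
    (i := c) (j := ρ₁ b) (l := d) (by rw [← h1]; exact ρ₁.injective.ne hab.symm) hcd.symm
  refine ⟨⟨ρ₂ * ρ₁, mul_mem hρ₂ ⟨σ, hρ₁⟩⟩, ?_, ?_⟩
  · change ρ₂ (ρ₁ a) = c
    rw [h1, h2]
  · exact h3

end Galois

/-! ### The trinomials `X ^ n + X ^ 2` and `X ^ n + X ^ (n - 1)` -/

section Trinomial

variable {K : Type*} [Field K]

/-- The substitution `Z = s S` turns `(f(Z) - f(S)) / (Z - S)` for `f = X ^ n + X ^ m` into a unit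
of `K(S)` times the polynomial of the hypothesis, in which the inner variable is `s` and the outer
one is `S`. -/
lemma exists_irreducible_quotient {n m : ℕ} (hm : 1 ≤ m) (hmn : m < n)
    (hW : Irreducible (C (∑ i ∈ Finset.range n, X ^ i) * X ^ (n - m)
      + C (∑ i ∈ Finset.range m, X ^ i) : K[X][X])) :
    ∃ w : (FractionRing K[X])[X], Irreducible w ∧
      (X ^ n + X ^ m : K[X]).map ((algebraMap K[X] (FractionRing K[X])).comp C)
        - C (algebraMap K[X] (FractionRing K[X]) (X ^ n + X ^ m))
          = (X - C (algebraMap K[X] (FractionRing K[X]) X)) * w := by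
  set S : FractionRing K[X] := algebraMap K[X] (FractionRing K[X]) X with hS
  have hS0 : S ≠ 0 := by
    rw [hS, Ne, FaithfulSMul.algebraMap_eq_zero_iff]; exact X_ne_zero
  have hswap : Bivariate.swap (C (∑ i ∈ Finset.range n, X ^ i) * X ^ (n - m)
      + C (∑ i ∈ Finset.range m, X ^ i) : K[X][X])
      = (∑ i ∈ Finset.range n, X ^ i) * C (X ^ (n - m)) + ∑ i ∈ Finset.range m, X ^ i := by
    rw [map_add, map_mul, Bivariate.swap_C, Bivariate.swap_C, map_pow, Bivariate.swap_Y]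
    simp [Polynomial.map_sum]
  have hirr := (MulEquiv.irreducible_iff (Bivariate.swap (R := K))).mpr hW
  rw [hswap] at hirr
  have hcoeff : ((∑ i ∈ Finset.range n, X ^ i) * C (X ^ (n - m)) + ∑ i ∈ Finset.range m, X ^ i :
      K[X][X]).coeff (n - 1) ≠ 0 := by
    rw [coeff_add, coeff_mul_C, finsetSum_coeff, finsetSum_coeff]
    simp only [coeff_X_pow, Finset.sum_ite_eq, Finset.mem_range]
    rw [if_pos (by omega), if_neg (by omega)]
    simp
  have hdeg : ((∑ i ∈ Finset.range n, X ^ i) * C (X ^ (n - m)) + ∑ i ∈ Finset.range m, X ^ i :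
      K[X][X]).natDegree ≠ 0 := by
    have := le_natDegree_of_ne_zero hcoeff
    omega
  have hirr2 := ((hirr.isPrimitive hdeg).irreducible_iff_irreducible_map_fraction_map
    (K := FractionRing K[X])).mp hirr
  let : Invertible (S⁻¹) := invertibleOfNonzero (inv_ne_zero hS0)
  have hirr3 := (MulEquiv.irreducible_iff (algEquivCMulXAddC (S⁻¹) 0)).mpr hirr2
  refine ⟨C (S ^ (m - 1)) * _, (irreducible_isUnit_mul
    (isUnit_C.mpr (pow_ne_zero _ hS0).isUnit)).mpr hirr3, ?_⟩
  set s : (FractionRing K[X])[X] := C S⁻¹ * X with hs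
  have hX : X = C S * s := by
    rw [hs, ← mul_assoc, ← C_mul, mul_inv_cancel₀ hS0, C_1, one_mul]
  have hA : ∀ i, s ^ i - 1 = (∑ j ∈ Finset.range i, s ^ j) * (s - 1) :=
    fun i => (geom_sum_mul s i).symm
  have e1 : algEquivCMulXAddC (S⁻¹) 0 (map (algebraMap K[X] (FractionRing K[X]))
      ((∑ i ∈ Finset.range n, X ^ i) * C (X ^ (n - m)) + ∑ i ∈ Finset.range m, X ^ i))
      = (∑ i ∈ Finset.range n, s ^ i) * C S ^ (n - m) + ∑ i ∈ Finset.range m, s ^ i := by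
    simp [algEquivCMulXAddC_apply, Polynomial.map_sum, hs, hS]
  rw [e1]
  have e2 : C S ^ n = C S ^ (n - m) * (C S ^ (m - 1) * C S) := by
    rw [← pow_succ, ← pow_add]; congr 1; omega
  have e3 : C S ^ m = C S ^ (m - 1) * C S := by
    rw [← pow_succ]; congr 1; omega
  have e4 : (X ^ n + X ^ m : K[X]).map ((algebraMap K[X] (FractionRing K[X])).comp C)
        - C (algebraMap K[X] (FractionRing K[X]) (X ^ n + X ^ m))
      = C S ^ n * (s ^ n - 1) + C S ^ m * (s ^ m - 1) := by
    rw [Polynomial.map_add, Polynomial.map_pow, Polynomial.map_pow, Polynomial.map_X, map_add,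
      map_pow, map_pow, ← hS, C_add, C_pow, C_pow, hX]
    ring
  rw [e4, hA, hA, e2, e3, C_pow]
  conv_rhs => rw [hX]
  ring

/-- The case `m = 2`: Eisenstein at `s + 1`, which does not divide `1 + s + ... + s ^ (n - 1)`
since `n` is odd. -/
lemma irreducible_quotient_two {n : ℕ} (hn : 3 ≤ n) (hodd : Odd n) :
    Irreducible (C (∑ i ∈ Finset.range n, X ^ i) * X ^ (n - 2)
      + C (∑ i ∈ Finset.range 2, X ^ i) : K[X][X]) := by
  have hB : (∑ i ∈ Finset.range 2, X ^ i : K[X]) = X - C (-1) := by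
    simp [Finset.sum_range_succ]; ring
  rw [hB]
  set A : K[X] := ∑ i ∈ Finset.range n, X ^ i with hA
  have hq : Irreducible (X - C (-1) : K[X]) := irreducible_X_sub_C _
  have hAq : ¬ (X - C (-1)) ∣ A := by
    rw [dvd_iff_isRoot, IsRoot.def, hA, eval_finsetSum]
    simp only [eval_pow, eval_X]
    rw [neg_one_geom_sum, if_neg (Nat.not_even_iff_odd.mpr hodd)]
    exact one_ne_zero
  have hA0 : A ≠ 0 := by rintro h; rw [h] at hAq; exact hAq (dvd_zero _)
  have hn2 : n - 2 ≠ 0 := by omega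
  have hnat : (C A * X ^ (n - 2) + C (X - C (-1)) : K[X][X]).natDegree = n - 2 := by
    rw [natDegree_add_C, natDegree_C_mul_X_pow _ _ hA0]
  have hcoe : ∀ i, (C A * X ^ (n - 2) + C (X - C (-1)) : K[X][X]).coeff i
      = (if i = n - 2 then A else 0) + (if i = 0 then X - C (-1) else 0) := by
    intro i
    rw [coeff_add, coeff_C_mul, coeff_X_pow, coeff_C]; simp
  have hlc : (C A * X ^ (n - 2) + C (X - C (-1)) : K[X][X]).leadingCoeff = A := by
    rw [leadingCoeff, hnat, hcoe, if_pos rfl, if_neg hn2, add_zero]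
  have h0 : (C A * X ^ (n - 2) + C (X - C (-1)) : K[X][X]).coeff 0 = X - C (-1) := by
    rw [hcoe, if_neg hn2.symm, if_pos rfl, zero_add]
  have hpos : 0 < (C A * X ^ (n - 2) + C (X - C (-1)) : K[X][X]).degree := by
    rw [← natDegree_pos_iff_degree_pos, hnat]; omega
  refine irreducible_of_eisenstein_criterion (P := Ideal.span {X - C (-1)})
    ((Ideal.span_singleton_prime hq.ne_zero).mpr hq.prime) ?_ ?_ hpos ?_ ?_
  · rw [hlc, Ideal.mem_span_singleton]; exact hAq
  · intro i hi
    rw [degree_eq_natDegree (ne_zero_of_degree_gt hpos), hnat] at hi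
    have hi' : i < n - 2 := by exact_mod_cast hi
    rw [hcoe, if_neg (by omega), zero_add, Ideal.mem_span_singleton]
    split_ifs
    · exact dvd_rfl
    · exact dvd_zero _
  · rw [h0, Ideal.span_singleton_pow, Ideal.mem_span_singleton]
    intro h
    have := (pow_dvd_pow_iff hq.ne_zero hq.not_isUnit (n := 2) (m := 1)).mp (by simpa using h)
    omega
  · intro r hr
    have h1 := (C_dvd_iff_dvd_coeff _ _).mp hr
    have h2 := h1 0
    have h3 := h1 (n - 2)
    rw [h0] at h2
    rw [hcoe, if_pos rfl, if_neg hn2, add_zero] at h3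
    exact (hq.coprime_iff_not_dvd.mpr hAq).isUnit_of_dvd' h2 h3

/-- The case `m = n - 1`: a linear polynomial with coprime coefficients. -/
lemma irreducible_quotient_pred {n : ℕ} (hn : 3 ≤ n) :
    Irreducible (C (∑ i ∈ Finset.range n, X ^ i) * X ^ (n - (n - 1))
      + C (∑ i ∈ Finset.range (n - 1), X ^ i) : K[X][X]) := by
  obtain ⟨l, rfl⟩ : ∃ l, n = l + 1 := ⟨n - 1, by omega⟩
  simp only [Nat.add_sub_cancel, Nat.add_sub_cancel_left, pow_one]
  have hcop : IsCoprime (∑ i ∈ Finset.range l, X ^ i : K[X])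
      (∑ i ∈ Finset.range (l + 1), X ^ i) := by
    refine ⟨-X, 1, ?_⟩
    rw [geom_sum_succ]; ring
  have hA0 : (∑ i ∈ Finset.range (l + 1), X ^ i : K[X]) ≠ 0 := by
    intro h
    have := congrArg (eval 0) h
    rw [eval_finsetSum, Finset.sum_range_succ'] at this
    simp at this
  apply irreducible_of_degree_eq_one_of_isRelPrime_coeff (degree_linear hA0)
  rw [coeff_add, coeff_add, coeff_C_mul, coeff_C_mul, coeff_C_zero, coeff_C_succ, coeff_X_zero,
    coeff_X_one, mul_zero, zero_add, mul_one, add_zero]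
  exact hcop.isRelPrime

/-- For `f = X ^ n + X ^ 2` the double root is `0`, and the cofactor `X ^ (n - 2) + 1` is separable
as `n - 2` is nonzero in `K`. -/
lemma trinomial_two_spec [IsAlgClosed K] {n : ℕ} (hn : 3 ≤ n) (hodd : Odd n)
    (hn2 : ((n - 2 : ℕ) : K) ≠ 0) :
    derivative (X ^ n + X ^ 2 : K[X]) ≠ 0 ∧
    ∃ (c y₀ : K) (g : K[X]), X ^ n + X ^ 2 - C c = (X - C y₀) ^ 2 * g ∧ g.Separable ∧
      g.eval y₀ ≠ 0 := by
  constructor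
  · intro h
    rw [derivative_add, derivative_X_pow, derivative_X_pow] at h
    have h1 := congrArg (fun p => coeff p 1) h
    have h2 := congrArg (fun p => coeff p (n - 1)) h
    simp only [coeff_add, coeff_C_mul, coeff_X_pow, coeff_zero, if_pos,
      if_neg (show ¬ (1 = n - 1) by omega), if_neg (show ¬ (n - 1 = 2 - 1) by omega)] at h1 h2
    norm_num at h1 h2
    obtain ⟨r, rfl⟩ := hodd
    push_cast at h2
    rw [h1] at h2
    simp at h2
  · refine ⟨0, 0, X ^ (n - 2) + 1, ?_, ?_, ?_⟩
    · obtain ⟨l, rfl⟩ : ∃ l, n = l + 2 := ⟨n - 2, by omega⟩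
      simp; ring
    · have := separable_X_pow_sub_C (-1 : K) hn2 (by simp)
      simpa using this
    · rw [eval_add, eval_pow, eval_X, zero_pow (by omega)]; simp

/-- For `f = X ^ n + X ^ (n - 1)` with `n = 2` in `K`, the derivative is `X ^ (n - 2) * (2 X + 1)`,
where `2 ≠ 0` in `K` because `n` is odd. The double root is the simple critical point `-1/2`, whose
critical value differs from the value `0` taken at the other critical point `0`. -/
lemma trinomial_pred_spec [IsAlgClosed K] {n : ℕ} (hn : 3 ≤ n) (hodd : Odd n)
    (hn2 : ((n - 2 : ℕ) : K) = 0) :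
    derivative (X ^ n + X ^ (n - 1) : K[X]) ≠ 0 ∧
    ∃ (c y₀ : K) (g : K[X]), X ^ n + X ^ (n - 1) - C c = (X - C y₀) ^ 2 * g ∧ g.Separable ∧
      g.eval y₀ ≠ 0 := by
  obtain ⟨l, rfl⟩ : ∃ l, n = l + 2 := ⟨n - 2, by omega⟩
  have hl : l ≠ 0 := by omega
  simp only [Nat.add_sub_cancel] at hn2
  have hl1 : l + 2 - 1 = l + 1 := by omega
  rw [hl1]
  have h2 : (2 : K) ≠ 0 := by
    intro h2
    obtain ⟨r, hr⟩ := hodd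
    have : (((l + 2 : ℕ)) : K) = ((2 * r + 1 : ℕ) : K) := by rw [hr]
    push_cast at this
    rw [hn2, h2] at this
    simp at this
  set f : K[X] := X ^ (l + 2) + X ^ (l + 1) with hf
  have hd : derivative f = X ^ l * (C 2 * X + 1) := by
    rw [hf, derivative_add, derivative_X_pow, derivative_X_pow]
    simp [hn2]; ring
  set y₀ : K := -(2⁻¹) with hy₀
  have hy0 : y₀ ≠ 0 := by simp [hy₀, h2]
  have hlin : (C 2 * X + 1 : K[X]) = C 2 * (X - C y₀) := by
    rw [hy₀, mul_sub, ← C_mul]; simp [h2]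
  have hfy : f.eval y₀ ≠ 0 := by
    have : f.eval y₀ = y₀ ^ (l + 1) * (y₀ + 1) := by rw [hf]; simp; ring
    rw [this]
    refine mul_ne_zero (pow_ne_zero _ hy0) ?_
    have : y₀ + 1 = 2⁻¹ := by rw [hy₀]; field_simp; norm_num
    rw [this]; exact inv_ne_zero h2
  have hd0 : derivative f ≠ 0 := by
    rw [hd, hlin]
    exact mul_ne_zero (pow_ne_zero _ X_ne_zero) (mul_ne_zero (C_ne_zero.mpr h2) (X_sub_C_ne_zero _))
  refine ⟨hd0, f.eval y₀, y₀, ?_⟩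
  obtain ⟨q, hq⟩ : (X - C y₀) ∣ f - C (f.eval y₀) := by
    rw [dvd_iff_isRoot]; simp
  have hdq : derivative f = q + (X - C y₀) * derivative q := by
    have := congrArg derivative hq
    simpa using this
  obtain ⟨g, rfl⟩ : (X - C y₀) ∣ q := by
    rw [dvd_iff_isRoot, IsRoot.def]
    have := congrArg (eval y₀) hdq
    rw [hd, hlin] at this
    simpa using this.symm
  have hdg : X ^ l * C 2 = 2 * g + (X - C y₀) * derivative g := by
    apply mul_left_cancel₀ (X_sub_C_ne_zero y₀)
    have h := hdq
    rw [hd, hlin, derivative_mul] at h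
    simp only [derivative_sub, derivative_X, derivative_C, sub_zero, one_mul] at h
    linear_combination h
  have hgy : g.eval y₀ ≠ 0 := by
    intro h
    have := congrArg (eval y₀) hdg
    simp [h, hy0, h2] at this
  refine ⟨g, by rw [hq]; ring, ?_, hgy⟩
  have hg0 : g ≠ 0 := by rintro rfl; simp at hgy
  rw [Polynomial.Separable, isCoprime_iff_aeval_ne_zero_of_isAlgClosed K K]
  intro a
  by_contra! h
  simp only [coe_aeval_eq_eval] at h
  have h3 := congrArg (eval a) hdg
  simp [h.1, h.2, h2] at h3
  have h4 := congrArg (eval a) hq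
  rw [h3.1] at h4 h
  simp [h.1, hf] at h4
  exact hfy (by simp only [hf, eval_add, eval_pow, eval_X]; linear_combination -h4)

end Trinomial

/-! ### Genericity, irreducibility of the resolvent, and specialization -/

lemma exists_eq_prod_X_sub_C {N : Type*} [Field N] [IsAlgClosed N] {ι : Type*} [Fintype ι]
    {q : N[X]} (hq : q.Monic) (hdeg : q.natDegree = Fintype.card ι) :
    ∃ y : ι → N, q = ∏ i, (X - C (y i)) := by
  have h1 := (IsAlgClosed.splits q).eq_prod_roots_of_monic hq
  have h2 := (IsAlgClosed.splits q).natDegree_eq_card_roots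
  set l := q.roots.toList with hl
  have hlen : l.length = Fintype.card ι := by
    rw [hl, Multiset.length_toList, ← h2, hdeg]
  let e : ι ≃ Fin l.length := (Fintype.equivFin ι).trans (finCongr hlen.symm)
  refine ⟨fun i => l.get (e i), ?_⟩
  rw [Fintype.prod_equiv e (fun i => X - C (l.get (e i))) (fun j => X - C (l.get j))
    (fun _ => rfl)]
  have h3 : q.roots = (l : Multiset N) := (Multiset.coe_toList _).symm
  rw [h3] at h1
  conv_lhs => rw [h1]
  rw [Multiset.map_coe, Multiset.prod_coe]
  conv_lhs => rw [← List.ofFn_get l]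
  rw [List.map_ofFn, List.prod_ofFn]
  rfl

/-- By linear independence of the embeddings `s i`, each condition excludes only a proper
`k`-subspace of `E`, and finitely many of those do not cover `E`. -/
lemma exists_forall_sum_ne_zero {k E N : Type*} [Field k] [Infinite k] [Field E] [Algebra k E]
    [Field N] {ι J : Type*} [Fintype ι] [Finite J] (κ : k →+* N) (s : ι → E →+* N)
    (hs : ∀ i, (s i).comp (algebraMap k E) = κ) (hinj : Function.Injective s)
    (d : J → ι → N) (hd : ∀ j, d j ≠ 0) :
    ∃ α : E, ∀ j, ∑ i, s i α * d j i ≠ 0 := by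
  let := κ.toAlgebra
  let s' : ι → E →ₐ[k] N := fun i => { s i with
    commutes' := fun r => congrArg (fun g : k →+* N => g r) (hs i) }
  let T : J → E →ₗ[k] N := fun j => ∑ i, (LinearMap.mulRight k (d j i)).comp (s' i).toLinearMap
  have hT : ∀ j α, T j α = ∑ i, s i α * d j i := fun j α => by
    simp only [T, LinearMap.sum_apply]
    rfl
  -- Dedekind: distinct characters are linearly independent.
  have hli : LinearIndependent N (fun i : ι => (s i : E → N)) := by
    refine (linearIndependent_monoidHom E N).comp (fun i => (s i : E →* N)) ?_
    intro a b hab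
    exact hinj (RingHom.ext fun x => congrArg (fun g : E →* N => g x) hab)
  have hker : ∀ j, LinearMap.ker (T j) ≠ ⊤ := by
    intro j hj
    refine hd j (funext fun i => ?_)
    refine Fintype.linearIndependent_iff.mp hli (d j) ?_ i
    funext α
    have : T j α = 0 := by
      rw [← LinearMap.mem_ker, hj]; trivial
    rw [hT] at this
    simp only [Finset.sum_apply, Pi.smul_apply, smul_eq_mul, Pi.zero_apply]
    rw [← this]
    exact Finset.sum_congr rfl fun i _ => mul_comm _ _
  have hfin : (Set.range fun j => LinearMap.ker (T j)).Finite := Set.finite_range _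
  have hne := Subspace.biUnion_ne_univ_of_top_notMem (s := hfin.toFinset) (by
    rw [Set.Finite.mem_toFinset]
    rintro ⟨j, hj⟩
    exact hker j hj)
  obtain ⟨α, hα⟩ := (Set.ne_univ_iff_exists_notMem _).mp hne
  refine ⟨α, fun j h0 => hα ?_⟩
  rw [Set.mem_iUnion₂]
  refine ⟨LinearMap.ker (T j), by simp, ?_⟩
  rw [SetLike.mem_coe, LinearMap.mem_ker, hT, h0]

/-- If the Galois group of `y` is the full symmetric group, it permutes the roots of the resolvent
transitively, so the resolvent is irreducible as soon as its roots are distinct. -/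
lemma irreducible_of_realizedPerms {F N : Type*} [Field F] [Field N] [Algebra F N]
    {ι : Type*} [Fintype ι] [DecidableEq ι] {P : F[X]} {u : ι → F} {y : ι → N}
    (hP : P.map (algebraMap F N) = permProd X (fun i => C (algebraMap F N (u i))) (fun i => C (y i)))
    (hinj : Function.Injective fun π : Equiv.Perm ι => ∑ i, algebraMap F N (u i) * y (π i))
    (htop : realizedPerms F y = ⊤) : Irreducible P := by
  set θ : Equiv.Perm ι → N := fun π => ∑ i, algebraMap F N (u i) * y (π i) with hθ
  have hP' : P.map (algebraMap F N) = ∏ π, (X - C (θ π)) := by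
    rw [hP, permProd]
    simp [hθ]
  have hmonic : P.Monic := by
    rw [(algebraMap F N).injective.monic_map_iff, hP']
    exact monic_prod_of_monic _ _ fun _ _ => monic_X_sub_C _
  have hroot : aeval (θ 1) P = 0 := by
    rw [← eval_map_algebraMap, hP', eval_prod]
    exact Finset.prod_eq_zero (Finset.mem_univ 1) (by simp)
  have hint : IsIntegral F (θ 1) := ⟨P, hmonic, hroot⟩
  have h1 : minpoly F (θ 1) ∣ P := minpoly.dvd _ _ hroot
  have h2 : P ∣ minpoly F (θ 1) := by
    rw [← Polynomial.map_dvd_map' (algebraMap F N), hP']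
    refine Finset.prod_dvd_of_coprime ?_ ?_
    · intro a _ b _ hab
      exact pairwise_coprime_X_sub_C hinj hab
    · intro π _
      rw [dvd_iff_isRoot, IsRoot.def, eval_map_algebraMap]
      obtain ⟨σ, hσ⟩ : π ∈ realizedPerms F y := by rw [htop]; trivial
      have : θ π = σ (θ 1) := by
        simp [hθ, hσ]
      rw [this]
      change aeval (σ.toAlgHom (θ 1)) _ = 0
      rw [aeval_algHom_apply, minpoly.aeval, map_zero]
  exact (associated_of_dvd_dvd h1 h2).irreducible (minpoly.irreducible hint)

lemma exists_bezout_of_separable_map {A F : Type*} [CommRing A] [IsDomain A] [Field F]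
    [Algebra A F] [IsFractionRing A F] {Q : A[X]} (hQ : (Q.map (algebraMap A F)).Separable) :
    ∃ (a b : A[X]) (d : A), d ≠ 0 ∧ a * Q + b * derivative Q = C d := by
  obtain ⟨a, b, hab⟩ := hQ
  obtain ⟨d₁, hd₁, h₁⟩ := IsLocalization.integerNormalization_spec (nonZeroDivisors A) a
  obtain ⟨d₂, hd₂, h₂⟩ := IsLocalization.integerNormalization_spec (nonZeroDivisors A) b
  set a' := IsLocalization.integerNormalization (nonZeroDivisors A) a
  set b' := IsLocalization.integerNormalization (nonZeroDivisors A) b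
  refine ⟨C d₂ * a', C d₁ * b', d₁ * d₂, ?_, ?_⟩
  · exact mul_ne_zero (nonZeroDivisors.ne_zero hd₁) (nonZeroDivisors.ne_zero hd₂)
  · apply Polynomial.map_injective _ (IsFractionRing.injective A F)
    rw [Polynomial.map_add, Polynomial.map_mul, Polynomial.map_mul, Polynomial.map_mul,
      Polynomial.map_mul, h₁, h₂, ← derivative_map, Polynomial.map_C, Polynomial.map_C,
      Polynomial.map_C, map_mul, C_mul, algebra_compatible_smul F d₁, algebra_compatible_smul F d₂,
      smul_eq_C_mul, smul_eq_C_mul]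
    linear_combination C (algebraMap A F d₁) * C (algebraMap A F d₂) * hab

/-- A simple root of `∏ j, (X - θ j)` is equal to exactly one `θ i`. -/
lemma exists_isolated_of_derivative_ne_zero {K J : Type*} [Field K] [Fintype J] [DecidableEq J]
    (θ : J → K) {x : K} (h0 : (∏ j, (X - C (θ j))).eval x = 0)
    (h1 : (derivative (∏ j, (X - C (θ j)))).eval x ≠ 0) :
    ∃ i, θ i = x ∧ ∀ j, j ≠ i → θ j ≠ x := by
  rw [eval_prod, Finset.prod_eq_zero_iff] at h0
  obtain ⟨i, -, hi⟩ := h0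
  simp only [eval_sub, eval_X, eval_C, sub_eq_zero] at hi
  refine ⟨i, hi.symm, fun j hj hjx => h1 ?_⟩
  rw [← Finset.mul_prod_erase _ _ (Finset.mem_univ i),
    ← Finset.mul_prod_erase _ _ (Finset.mem_erase.mpr ⟨hj, Finset.mem_univ j⟩)]
  simp [derivative_mul, ← hi, hjx]

/-- Kept separate from the next lemma so that `K₁` and `K₂` can carry different `E`-algebra
structures. -/
lemma exists_algHom_comp_eq {k E K₁ K₂ : Type*} [Field k] [Field E] [Algebra k E] [Field K₁]
    [Field K₂] [Algebra k K₁] [Algebra k K₂] [Algebra.IsAlgebraic k K₁] [IsAlgClosed K₂]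
    (s₁ : E →ₐ[k] K₁) (s₂ : E →ₐ[k] K₂) : ∃ τ : K₁ →ₐ[k] K₂, ∀ x, τ (s₁ x) = s₂ x := by
  let := s₁.toRingHom.toAlgebra
  let := s₂.toRingHom.toAlgebra
  have : IsScalarTower k E K₁ := IsScalarTower.of_algebraMap_eq' s₁.comp_algebraMap.symm
  have : IsScalarTower k E K₂ := IsScalarTower.of_algebraMap_eq' s₂.comp_algebraMap.symm
  have : Algebra.IsAlgebraic E K₁ := Algebra.IsAlgebraic.tower_top (K := k) E
  let τ : K₁ →ₐ[E] K₂ := IsAlgClosed.lift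
  exact ⟨τ.restrictScalars k, fun x => τ.commutes x⟩

lemma exists_algEquiv_comp_eq {k E K : Type*} [Field k] [Field E] [Algebra k E] [Field K]
    [Algebra k K] [IsAlgClosure k K] (σ₀ σ : E →ₐ[k] K) :
    ∃ τ : K ≃ₐ[k] K, ∀ x, τ (σ₀ x) = σ x := by
  have : IsAlgClosed K := IsAlgClosure.isAlgClosed k
  have : Algebra.IsAlgebraic k K := IsAlgClosure.isAlgebraic
  obtain ⟨τ, hτ⟩ := exists_algHom_comp_eq σ₀ σ
  exact ⟨AlgEquiv.ofBijective τ (Algebra.IsAlgebraic.algHom_bijective τ), hτ⟩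

/-- If `x₀ ∈ k` equals `∑ σ, σ α * y σ` for the roots `y` of `q`, but for no other ordering of these
roots, then `q` is irreducible and `E` is generated by one of its roots. Indeed an automorphism `τ`
of `K` over `k` fixes `x₀`, hence maps `y σ` to `y (τ σ)`; in particular `y σ` is fixed by the
automorphisms over `σ E`, so it is of the form `σ x`, with `x` independent of `σ`. -/
theorem generates_of_isolated {k E K : Type*} [Field k] [Field E] [Algebra k E]
    [FiniteDimensional k E] [Algebra.IsSeparable k E] [Field K] [Algebra k K] [IsAlgClosure k K]
    {q : k[X]} {y : (E →ₐ[k] K) → K}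
    (hq : q.map (algebraMap k K) = ∏ σ, (X - C (y σ))) {α : E} {x₀ : k}
    (hx₀ : ∑ σ : E →ₐ[k] K, σ α * y σ = algebraMap k K x₀)
    (hiso : ∀ π : Equiv.Perm (E →ₐ[k] K), π ≠ 1 →
      ∑ σ : E →ₐ[k] K, σ α * y (π σ) ≠ algebraMap k K x₀) :
    Irreducible q ∧ ∃ x : E, aeval x q = 0 ∧ IntermediateField.adjoin k {x} = ⊤ := by
  classical
  have : IsAlgClosed K := IsAlgClosure.isAlgClosed k
  have : Algebra.IsAlgebraic k K := IsAlgClosure.isAlgebraic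
  have hy : Function.Injective y := by
    intro a b hab
    by_contra hne
    refine hiso (Equiv.swap a b) (by rwa [Ne, Equiv.swap_eq_one_iff]) ?_
    rw [← hx₀]
    refine Finset.sum_congr rfl fun σ _ => ?_
    congr 1
    by_cases h1 : σ = a
    · rw [h1, Equiv.swap_apply_left, hab]
    by_cases h2 : σ = b
    · rw [h2, Equiv.swap_apply_right, hab]
    rw [Equiv.swap_apply_of_ne_of_ne h1 h2]
  have hgal : ∀ (τ : K ≃ₐ[k] K) (σ : E →ₐ[k] K), τ (y σ) = y (τ.toAlgHom.comp σ) := by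
    intro τ
    obtain ⟨ρ, hρ⟩ := exists_perm_of_algEquiv hy hq τ
    let l : Equiv.Perm (E →ₐ[k] K) :=
      { toFun := fun σ => τ.toAlgHom.comp σ
        invFun := fun σ => τ.symm.toAlgHom.comp σ
        left_inv := fun σ => by ext; simp
        right_inv := fun σ => by ext; simp }
    -- Applying `τ` to the sum for `x₀` gives the sum for the ordering `ρ * l⁻¹`.
    have hl : ρ * l⁻¹ = 1 := by
      by_contra hne
      refine hiso _ hne ?_
      rw [← τ.commutes x₀, ← hx₀, map_sum]
      refine (Fintype.sum_equiv l _ _ fun σ => ?_).symm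
      rw [map_mul, hρ, Equiv.Perm.mul_apply, Equiv.Perm.inv_def, Equiv.symm_apply_apply]
      rfl
    intro σ
    rw [hρ, mul_inv_eq_one.mp hl]
    rfl
  have hqsep : q.Separable := by
    rw [← separable_map (algebraMap k K), hq]
    exact separable_prod_X_sub_C_iff.mpr hy
  have hqy : ∀ σ, aeval (y σ) q = 0 := by
    intro σ
    rw [← eval_map_algebraMap, hq, eval_prod]
    exact Finset.prod_eq_zero (Finset.mem_univ σ) (by simp)
  let σ₀ : E →ₐ[k] K := IsAlgClosed.lift
  obtain ⟨x, hx⟩ : ∃ x, σ₀ x = y σ₀ := by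
    let := σ₀.toRingHom.toAlgebra
    have : IsScalarTower k E K := IsScalarTower.of_algebraMap_eq' σ₀.comp_algebraMap.symm
    have : Algebra.IsAlgebraic E K := Algebra.IsAlgebraic.tower_top (K := k) E
    have : IsAlgClosure E K := ⟨inferInstance, inferInstance⟩
    have : Normal E K := IsAlgClosure.normal _ _
    by_contra hnot
    have hsep : IsSeparable E (y σ₀) := by
      refine (hqsep.map (f := algebraMap k E)).of_dvd (minpoly.dvd _ _ ?_)
      rw [aeval_map_algebraMap, hqy]
    obtain ⟨τ, hτ⟩ := exists_algEquiv_apply_ne hsep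
      (by rintro ⟨x, hx⟩; exact hnot ⟨x, hx⟩)
    apply hτ
    have h1 := hgal (τ.restrictScalars k) σ₀
    have h2 : (τ.restrictScalars k).toAlgHom.comp σ₀ = σ₀ :=
      AlgHom.ext fun x => τ.commutes x
    rw [h2] at h1
    exact h1
  have hxσ : ∀ σ : E →ₐ[k] K, σ x = y σ := by
    intro σ
    obtain ⟨τ, hτ⟩ := exists_algEquiv_comp_eq σ₀ σ
    have h2 : τ.toAlgHom.comp σ₀ = σ := AlgHom.ext hτ
    rw [← hτ, hx, hgal, h2]
  have hprim : IntermediateField.adjoin k {x} = ⊤ := by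
    rw [Field.primitive_element_iff_algHom_eq_of_eval' k K (fun x => IsAlgClosed.splits _)]
    intro σ σ' h
    exact hy (by rw [← hxσ, ← hxσ]; exact h)
  have hqx : aeval x q = 0 := by
    have h := aeval_algHom_apply σ₀ x q
    rw [hxσ, hqy] at h
    exact (map_eq_zero σ₀).mp h.symm
  have hqm : q.Monic := by
    rw [(algebraMap k K).injective.monic_map_iff, hq]
    exact monic_prod_of_monic _ _ fun _ _ => monic_X_sub_C _
  have hint : IsIntegral k x := Algebra.IsIntegral.isIntegral x
  have hdeg : q.natDegree = (minpoly k x).natDegree := by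
    rw [(Field.primitive_element_iff_minpoly_natDegree_eq k x).mp hprim, ← AlgHom.card k E K,
      ← natDegree_map (algebraMap k K), hq,
      natDegree_prod_of_monic _ _ (fun _ _ => monic_X_sub_C _)]
    simp
  refine ⟨?_, x, hqx, hprim⟩
  rw [eq_of_monic_of_dvd_of_natDegree_le (minpoly.monic hint) hqm (minpoly.dvd k x hqx) hdeg.le]
  exact minpoly.irreducible hint

/-- For some `m`, the Galois group of `X ^ n + X ^ m - t` over `K(t)` is the full symmetric group. -/
theorem exists_trinomial_realizedPerms_eq_top {K : Type*} [Field K] [IsAlgClosed K]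
    {F : Type*} [Field F] [Algebra K[X] F] [IsFractionRing K[X] F]
    {N : Type*} [Field N] [Algebra F N] [IsAlgClosure F N] {n : ℕ} (hn : 3 ≤ n) (hodd : Odd n)
    {ι : Type*} [Fintype ι] :
    ∃ m, 1 ≤ m ∧ m < n ∧ derivative (X ^ n + X ^ m : K[X]) ≠ 0 ∧
      ∀ y : ι → N, Function.Injective y →
        ((((X ^ n + X ^ m : K[X]).map C - C X : K[X][X]).map (algebraMap K[X] F)).map
          (algebraMap F N) = ∏ i, (X - C (y i))) → realizedPerms F y = ⊤ := by
  have aux : ∀ m, m < n → (X ^ n + X ^ m : K[X]).Monic ∧ (X ^ n + X ^ m : K[X]).natDegree ≠ 0 := by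
    intro m hm
    have hdeg : (X ^ m : K[X]).degree < (X ^ n : K[X]).degree := by
      simpa [degree_X_pow] using hm
    refine ⟨(monic_X_pow n).add_of_left hdeg, ?_⟩
    rw [natDegree_add_eq_left_of_degree_lt hdeg, natDegree_X_pow]
    omega
  by_cases h : ((n - 2 : ℕ) : K) = 0
  · obtain ⟨hd, c, y₀, g, hfg, hg, hgy⟩ := trinomial_pred_spec hn hodd h
    obtain ⟨w, hw, hfw⟩ := exists_irreducible_quotient (K := K) (n := n) (m := n - 1)
      (by omega) (by omega) (irreducible_quotient_pred hn)
    obtain ⟨h1, h2⟩ := aux (n - 1) (by omega)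
    exact ⟨n - 1, by omega, by omega, hd, fun y hy hh =>
      realizedPerms_eq_top h1 h2 hfg hg hgy hw hfw hy hh⟩
  · obtain ⟨hd, c, y₀, g, hfg, hg, hgy⟩ := trinomial_two_spec hn hodd h
    obtain ⟨w, hw, hfw⟩ := exists_irreducible_quotient (K := K) (n := n) (m := 2)
      (by omega) (by omega) (irreducible_quotient_two hn hodd)
    obtain ⟨h1, h2⟩ := aux 2 (by omega)
    exact ⟨2, by omega, by omega, hd, fun y hy hh =>
      realizedPerms_eq_top h1 h2 hfg hg hgy hw hfw hy hh⟩

/-! ### Rational points over a PAC field and the conclusion -/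

lemma map_equivMvPolynomial {k K : Type*} [Field k] [Field K] (j : k →+* K) (P : k[X][X]) :
    MvPolynomial.map j (Bivariate.equivMvPolynomial k P)
      = Bivariate.equivMvPolynomial K (P.map (mapRingHom j)) := by
  have : (MvPolynomial.map j).comp (Bivariate.equivMvPolynomial k).toRingEquiv.toRingHom
      = (Bivariate.equivMvPolynomial K).toRingEquiv.toRingHom.comp
        (mapRingHom (mapRingHom j)) := by
    refine Polynomial.ringHom_ext' (Polynomial.ringHom_ext' ?_ ?_) ?_
    · ext a : 1
      simp
    · simp
    · simp
  exact congrArg (fun r => r P) this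

lemma eval_equivMvPolynomial {k : Type*} [Field k] (t x : k) (P : k[X][X]) :
    MvPolynomial.eval ![t, x] (Bivariate.equivMvPolynomial k P) = P.evalEval t x := by
  have : (MvPolynomial.eval ![t, x]).comp (Bivariate.equivMvPolynomial k).toRingEquiv.toRingHom
      = evalEvalRingHom t x := by
    refine Polynomial.ringHom_ext' (Polynomial.ringHom_ext' ?_ ?_) ?_
    · ext a : 1
      simp
    · simp
    · simp
  exact congrArg (fun r => r P) this

lemma IsPAC.infinite {k : Type*} [Field k] (h : IsPAC k) : Infinite k := by
  have h1 := h (MvPolynomial.X 0) (by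
    rw [MvPolynomial.map_X]; exact MvPolynomial.X_prime.irreducible)
  by_contra hfin
  rw [not_infinite_iff_finite] at hfin
  exact h1 (Set.toFinite _)

/-- A PAC field has points on the curve `P = 0` away from finitely many vertical lines: as `P` is
monic in the second variable, each such line contains only finitely many points of the curve. -/
lemma IsPAC.exists_point {k : Type*} [Field k] (h : IsPAC k) {P : k[X][X]} (hP : P.Monic)
    (hirr : Irreducible (P.map (mapRingHom (algebraMap k (AlgebraicClosure k)))))
    {d : (AlgebraicClosure k)[X]} (hd : d ≠ 0) :
    ∃ t x : k, P.evalEval t x = 0 ∧ d.eval (algebraMap k (AlgebraicClosure k) t) ≠ 0 := by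
  have hinf := h (Bivariate.equivMvPolynomial k P) (by
    rw [map_equivMvPolynomial]
    exact (MulEquiv.irreducible_iff (Bivariate.equivMvPolynomial (AlgebraicClosure k))).mpr hirr)
  simp only [eval_equivMvPolynomial] at hinf
  by_contra! hall
  refine hinf ?_
  have hT : {t : k | d.eval (algebraMap k (AlgebraicClosure k) t) = 0}.Finite := by
    refine Set.Finite.preimage (f := algebraMap k (AlgebraicClosure k))
      (s := {a | d.eval a = 0}) (algebraMap k (AlgebraicClosure k)).injective.injOn ?_
    exact (finite_setOfPred_isRoot hd)
  refine (hT.biUnion (t := fun t => (fun x => (t, x)) '' {x | P.evalEval t x = 0})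
    fun t _ => Set.Finite.image _ ?_).subset ?_
  · have := finite_setOfPred_isRoot (hP.map (evalRingHom t)).ne_zero
    simpa only [IsRoot.def, map_evalRingHom_eval] using this
  · rintro ⟨t, x⟩ hx
    exact Set.mem_biUnion (show t ∈ _ from hall t x hx) ⟨x, hx, rfl⟩

lemma prod_X_sub_C_algHom_eq_map_minpoly {k E K : Type*} [Field k] [Field E] [Algebra k E]
    [FiniteDimensional k E] [Algebra.IsSeparable k E] [Field K] [Algebra k K] [IsAlgClosed K]
    {α : E} (hα : Function.Injective fun σ : E →ₐ[k] K => σ α) :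
    (minpoly k α).map (algebraMap k K) = ∏ σ : E →ₐ[k] K, (X - C (σ α)) := by
  have hint : IsIntegral k α := Algebra.IsIntegral.isIntegral α
  refine eq_of_monic_of_dvd_of_natDegree_le (monic_prod_of_monic _ _ fun _ _ => monic_X_sub_C _)
    ((minpoly.monic hint).map _) ?_ ?_
  · refine Finset.prod_dvd_of_coprime (fun a _ b _ hab => pairwise_coprime_X_sub_C hα hab) ?_
    intro σ _
    rw [dvd_iff_isRoot, IsRoot.def, eval_map_algebraMap, aeval_algHom_apply, minpoly.aeval,
      map_zero]
  · rw [natDegree_prod_of_monic _ _ (fun _ _ => monic_X_sub_C _), natDegree_map]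
    simp only [natDegree_X_sub_C, Finset.sum_const, Finset.card_univ, smul_eq_mul, mul_one]
    rw [AlgHom.card]
    exact minpoly.natDegree_le α

theorem stmt_14 (k E : Type*) [Field k] [Field E] [Algebra k E]
    [Algebra.IsSeparable k E]
    (hPAC : IsPAC k) (n : ℕ) (hn : 3 ≤ n) (hodd : Odd n)
    (hdeg : Module.finrank k E = n) :
    ∃ m : ℕ, 1 ≤ m ∧ m < n ∧
      ∃ a b : k, Irreducible (X ^ n + C a * X ^ m + C b) ∧
        ∃ x : E, Polynomial.aeval x (X ^ n + C a * X ^ m + C b) = 0 ∧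
          IntermediateField.adjoin k {x} = ⊤ := by
  classical
  have : FiniteDimensional k E := Module.finite_of_finrank_pos (by omega)
  have : Infinite k := hPAC.infinite
  let K := AlgebraicClosure k
  let F := FractionRing K[X]
  let N := AlgebraicClosure F
  let jK : k →+* K := algebraMap k K
  have hcard : Fintype.card (E →ₐ[k] K) = n := by rw [AlgHom.card, hdeg]
  obtain ⟨m, hm1, hmn, hder, htop⟩ := exists_trinomial_realizedPerms_eq_top (K := K) (F := F)
    (N := N) hn hodd (ι := E →ₐ[k] K)
  have aux : ∀ (R : Type _) [Field R],
      (X ^ n + X ^ m : R[X]).Monic ∧ (X ^ n + X ^ m : R[X]).natDegree = n := by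
    intro R _
    have hdeg : (X ^ m : R[X]).degree < (X ^ n : R[X]).degree := by
      simpa [degree_X_pow] using hmn
    refine ⟨(monic_X_pow n).add_of_left hdeg, ?_⟩
    rw [natDegree_add_eq_left_of_degree_lt hdeg, natDegree_X_pow]
  obtain ⟨hfm, hfn⟩ := aux K
  obtain ⟨hfm', hfn'⟩ := aux k
  have hfn0 : (X ^ n + X ^ m : K[X]).natDegree ≠ 0 := by omega
  -- the roots of the generic trinomial
  obtain ⟨y, hy⟩ := exists_eq_prod_X_sub_C (N := N) (ι := E →ₐ[k] K)
    (((monic_family hfm hfn0).map (algebraMap K[X] F)).map (algebraMap F N)) (by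
      rw [((monic_family hfm hfn0).map (algebraMap K[X] F)).natDegree_map,
        (monic_family hfm hfn0).natDegree_map, natDegree_sub_C, hfm.natDegree_map, hfn, hcard])
  have hyinj : Function.Injective y := by
    rw [← separable_prod_X_sub_C_iff, ← hy]
    exact (separable_family hfm hfn0 hder).map
  have htop := htop y hyinj hy
  -- a generic element of `E`
  let κ : K →+* N := (algebraMap F N).comp ((algebraMap K[X] F).comp C)
  obtain ⟨α, hα⟩ := exists_forall_sum_ne_zero (E := E) (κ.comp (algebraMap k K))
    (fun σ : E →ₐ[k] K => κ.comp σ.toRingHom)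
    (fun σ => by rw [RingHom.comp_assoc]; congr 1; exact σ.comp_algebraMap)
    (fun σ σ' h => AlgHom.ext fun x => κ.injective (congrArg (fun g : E →+* N => g x) h))
    (fun (p : {p : Equiv.Perm (E →ₐ[k] K) × Equiv.Perm (E →ₐ[k] K) // p.1 ≠ p.2}) σ =>
      y (p.1.1 σ) - y (p.1.2 σ))
    (fun p h => p.2 (Equiv.ext fun σ => hyinj (sub_eq_zero.mp (congrFun h σ))))
  have hθ : Function.Injective
      fun π : Equiv.Perm (E →ₐ[k] K) => ∑ σ, κ (σ α) * y (π σ) := by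
    intro π π' h
    by_contra hne
    refine hα ⟨(π, π'), hne⟩ ?_
    simp only [mul_sub, Finset.sum_sub_distrib]
    exact sub_eq_zero.mpr h
  have hz : Function.Injective fun σ : E →ₐ[k] K => σ α := by
    intro σ σ' h
    by_contra hne
    refine hne (Equiv.swap_eq_one_iff.mp (hθ (a₁ := Equiv.swap σ σ') (a₂ := 1) ?_))
    refine Fintype.sum_equiv (Equiv.swap σ σ') _ _ fun τ => ?_
    rw [Equiv.Perm.one_apply]
    congr 2
    exact (Equiv.apply_swap_eq_self (v := fun σ : E →ₐ[k] K => σ α) h τ).symm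
  obtain ⟨Φ, hΦ⟩ := exists_resolventOf (fun σ : E →ₐ[k] K => σ α) (minpoly k α)
    (prod_X_sub_C_algHom_eq_map_minpoly hz)
  -- the resolvent polynomial
  set hk : k[X][X] := (X ^ n + X ^ m : k[X]).map C - C X with hhk
  have hhK : hk.map (mapRingHom jK) = (X ^ n + X ^ m : K[X]).map C - C X := by
    simp [hhk]
  set P : k[X][X] := resolventOf Φ C hk with hP
  let big : k[X] →+* N := (algebraMap F N).comp ((algebraMap K[X] F).comp (mapRingHom jK))
  have hbig : Function.Injective big :=
    (algebraMap F N).injective.comp ((IsFractionRing.injective K[X] F).comp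
      (Polynomial.map_injective jK jK.injective))
  have hPK : ((P.map (mapRingHom jK)).map (algebraMap K[X] F)).map (algebraMap F N)
      = P.map big := by
    rw [Polynomial.map_map, Polynomial.map_map]
    rfl
  have hPbig : P.map big = permProd X (fun σ : E →ₐ[k] K => C (κ (σ α))) (fun σ => C (y σ)) := by
    have h1 : big.comp C = κ.comp (algebraMap k K) := by
      ext a : 1
      simp [big, κ, jK]
    have h2 : hk.map big = ∏ σ, (X - C (y σ)) := by
      rw [← hy, ← hhK, Polynomial.map_map, Polynomial.map_map]
      rfl
    rw [hP, resolventOf_map, h1, h2, hΦ]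
  have hPprod : P.map big = ∏ π : Equiv.Perm (E →ₐ[k] K), (X - C (∑ σ, κ (σ α) * y (π σ))) := by
    rw [hPbig, permProd]
    simp
  have hPm : P.Monic := by
    rw [hbig.monic_map_iff, hPprod]
    exact monic_prod_of_monic _ _ fun _ _ => monic_X_sub_C _
  have hirrF : Irreducible ((P.map (mapRingHom jK)).map (algebraMap K[X] F)) :=
    irreducible_of_realizedPerms (u := fun σ : E →ₐ[k] K => algebraMap K[X] F (C (σ α)))
      (hPK.trans hPbig) hθ htop
  have hirr : Irreducible (P.map (mapRingHom jK)) :=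
    (hPm.map _).irreducible_iff_irreducible_map_fraction_map.mpr hirrF
  have hsep : ((P.map (mapRingHom jK)).map (algebraMap K[X] F)).Separable := by
    rw [← separable_map (algebraMap F N), hPK, hPprod]
    exact separable_prod_X_sub_C_iff.mpr hθ
  obtain ⟨a, b, d, hd, hbez⟩ := exists_bezout_of_separable_map hsep
  obtain ⟨t, x₀, hx₀, hdt⟩ := hPAC.exists_point hPm hirr hd
  -- specialisation at `t`
  set q : k[X] := X ^ n + X ^ m - C t with hq
  have hqm : q.Monic := by
    apply hfm'.sub_of_left
    exact degree_C_le.trans_lt (natDegree_pos_iff_degree_pos.mp (by omega))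
  obtain ⟨v, hv⟩ := exists_eq_prod_X_sub_C (N := K) (ι := E →ₐ[k] K) (hqm.map jK) (by
    rw [hqm.natDegree_map, hq, natDegree_sub_C, hfn', hcard])
  set R : K[X] := (P.map (evalRingHom t)).map jK with hR
  have hRprod : R = ∏ π : Equiv.Perm (E →ₐ[k] K), (X - C (∑ σ, σ α * v (π σ))) := by
    have h1 : (jK.comp (evalRingHom t)).comp C = (RingHom.id K).comp (algebraMap k K) := by
      ext a : 1
      simp [jK]
    have h2 : hk.map (jK.comp (evalRingHom t)) = ∏ σ, (X - C (v σ)) := by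
      rw [← hv, ← Polynomial.map_map]
      simp [hhk, hq]
    rw [hR, Polynomial.map_map, hP, resolventOf_map, h1, h2, hΦ, permProd]
    simp
  have hR' : R = (P.map (mapRingHom jK)).map (evalRingHom (jK t)) := by
    rw [hR, Polynomial.map_map, Polynomial.map_map]
    congr 1
    ext <;> simp
  have hR0 : R.eval (jK x₀) = 0 := by
    rw [hR, eval_map, eval₂_at_apply, map_evalRingHom_eval, hx₀, map_zero]
  have hR1 : (derivative R).eval (jK x₀) ≠ 0 := by
    intro h0
    have h1 := congrArg (fun p => (p.map (evalRingHom (jK t))).eval (jK x₀)) hbez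
    simp only [Polynomial.map_add, Polynomial.map_mul, ← derivative_map, ← hR', eval_add, eval_mul,
      hR0, h0, mul_zero, add_zero, Polynomial.map_C, eval_C, coe_evalRingHom] at h1
    exact hdt h1.symm
  rw [hRprod] at hR0 hR1
  obtain ⟨π₀, hπ₀, hiso⟩ := exists_isolated_of_derivative_ne_zero _ hR0 hR1
  have hv' : q.map (algebraMap k K) = ∏ σ : E →ₐ[k] K, (X - C (v (π₀ σ))) := by
    rw [Equiv.prod_comp π₀ (fun σ => X - C (v σ))]
    exact hv
  obtain ⟨hqirr, x, hx, hgen⟩ := generates_of_isolated (y := fun σ => v (π₀ σ)) hv' hπ₀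
    (fun π hπ => hiso (π₀ * π) (by simpa using hπ))
  have hform : X ^ n + C 1 * X ^ m + C (-t) = q := by
    rw [hq, C_1, one_mul, C_neg, sub_eq_add_neg]
  refine ⟨m, hm1, hmn, 1, -t, ?_, x, ?_, hgen⟩
  · rw [hform]; exact hqirr
  · rw [hform]; exact hx
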